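/- arXiv:2603.27458 — 9 statements merged into one kernel-verified Lean document; each statement's English description precedes it below -/
import Mathlib

section
/- Let C be a bivariate copula and define the reflected copulas C*(u,v) = u + v − 1 + C(1−u, 1−v), C¹*(u,v) = v − C(1−u, v), and C²*(u,v) = u − C(u, 1−v). Assume that for every u ∈ (0,1), the maps v ↦ C(u,v) and v ↦ v − C(u,v) are continuous and strictly increasing on [0,1]. Then for all p, q ∈ (0,1): v(q|p; C) = 1 − v(1−q | p; C²*) and v(q|p; C*) = 1 − v(1−q | p; C¹*). -/
open Set Filter Topology

/-- A bivariate copula: `C : [0,1]² → [0,1]` with the boundary conditions and the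
2-increasing property. -/
def IsCopula (C : ℝ → ℝ → ℝ) : Prop :=
  (∀ u ∈ Icc (0:ℝ) 1, ∀ v ∈ Icc (0:ℝ) 1, C u v ∈ Icc (0:ℝ) 1) ∧
  (∀ u ∈ Icc (0:ℝ) 1, C u 0 = 0) ∧
  (∀ v ∈ Icc (0:ℝ) 1, C 0 v = 0) ∧
  (∀ u ∈ Icc (0:ℝ) 1, C u 1 = u) ∧
  (∀ v ∈ Icc (0:ℝ) 1, C 1 v = v) ∧
  (∀ u₁ u₂ v₁ v₂ : ℝ, u₁ ∈ Icc (0:ℝ) 1 → u₂ ∈ Icc (0:ℝ) 1 → v₁ ∈ Icc (0:ℝ) 1 →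
    v₂ ∈ Icc (0:ℝ) 1 → u₁ ≤ u₂ → v₁ ≤ v₂ →
    0 ≤ C u₂ v₂ - C u₂ v₁ - C u₁ v₂ + C u₁ v₁)

/-- The copula-adjusted probability level `v(q|p;C) = inf{v ∈ [0,1] : C(p,v)/p ≥ q}`. -/
noncomputable def vLevel (C : ℝ → ℝ → ℝ) (p q : ℝ) : ℝ :=
  sInf {v ∈ Icc (0:ℝ) 1 | q ≤ C p v / p}

theorem vLevel_eq (D : ℝ → ℝ → ℝ) (p q w : ℝ) (hp : 0 < p) (hw : w ∈ Icc (0:ℝ) 1)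
    (hD : StrictMonoOn (fun v => D p v) (Icc 0 1)) (h : D p w = q * p) :
    vLevel D p q = w := by
  have hS : {v ∈ Icc (0:ℝ) 1 | q ≤ D p v / p} = Icc w 1 := by
    ext v
    simp only [mem_ofPred_eq, le_div_iff₀ hp, ← h]
    constructor
    · rintro ⟨hv, hle⟩
      exact ⟨(hD.le_iff_le hw hv).1 hle, hv.2⟩
    · rintro ⟨h1, h2⟩
      have hv : v ∈ Icc (0:ℝ) 1 := ⟨hw.1.trans h1, h2⟩
      exact ⟨hv, (hD.le_iff_le hw hv).2 h1⟩
  rw [vLevel, hS, csInf_Icc hw.2]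

/-- Reflection identities for the copula-adjusted probability level:
`v(q|p;C) = 1 − v(1−q|p;C²*)` and `v(q|p;C*) = 1 − v(1−q|p;C¹*)`, where
`C*(u,v) = u+v−1+C(1−u,1−v)`, `C¹*(u,v) = v−C(1−u,v)`, `C²*(u,v) = u−C(u,1−v)`. -/
theorem vLevel_reflection (C : ℝ → ℝ → ℝ) (hC : IsCopula C)
    (hmono : ∀ u ∈ Ioo (0:ℝ) 1,
      ContinuousOn (fun v => C u v) (Icc 0 1) ∧
      StrictMonoOn (fun v => C u v) (Icc 0 1) ∧
      ContinuousOn (fun v => v - C u v) (Icc 0 1) ∧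
      StrictMonoOn (fun v => v - C u v) (Icc 0 1))
    (p q : ℝ) (hp : p ∈ Ioo (0:ℝ) 1) (hq : q ∈ Ioo (0:ℝ) 1) :
    vLevel C p q = 1 - vLevel (fun u v => u - C u (1 - v)) p (1 - q) ∧
    vLevel (fun u v => u + v - 1 + C (1 - u) (1 - v)) p q
      = 1 - vLevel (fun u v => v - C (1 - u) v) p (1 - q) := by
  obtain ⟨-, h0, -, h1, -, -⟩ := hC
  have refl_mem : ∀ x : ℝ, x ∈ Icc (0:ℝ) 1 → 1 - x ∈ Icc (0:ℝ) 1 := by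
    rintro x ⟨hx0, hx1⟩
    constructor <;> linarith
  obtain ⟨hp0, hp1⟩ := hp
  obtain ⟨hq0, hq1⟩ := hq
  constructor
  · obtain ⟨hc, hm, -, -⟩ := hmono p ⟨hp0, hp1⟩
    have hpI : p ∈ Icc (0:ℝ) 1 := ⟨hp0.le, hp1.le⟩
    obtain ⟨w, hw, hwe⟩ : q * p ∈ Set.image (fun v => C p v) (Icc 0 1) := by
      apply intermediate_value_Icc zero_le_one hc
      simp only [h0 p hpI, h1 p hpI]
      constructor <;> nlinarith
    simp only at hwe
    rw [vLevel_eq C p q w hp0 hw hm hwe,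
      vLevel_eq (fun u v => u - C u (1 - v)) p (1 - q) (1 - w) hp0 (refl_mem w hw)]
    · ring
    · intro a ha b hb hab
      have := hm (refl_mem b hb) (refl_mem a ha) (by linarith)
      simp only at this ⊢
      linarith
    · simp only [sub_sub_cancel, hwe]
      ring
  · obtain ⟨-, -, hc, hm⟩ := hmono (1 - p) ⟨by linarith, by linarith⟩
    have hpI : 1 - p ∈ Icc (0:ℝ) 1 := ⟨by linarith, by linarith⟩
    obtain ⟨w, hw, hwe⟩ : (1 - q) * p ∈ Set.image (fun v => v - C (1 - p) v) (Icc 0 1) := by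
      apply intermediate_value_Icc zero_le_one hc
      simp only [h0 _ hpI, h1 _ hpI]
      constructor <;> nlinarith
    simp only at hwe
    rw [vLevel_eq (fun u v => v - C (1 - u) v) p (1 - q) w hp0 hw hm hwe,
      vLevel_eq (fun u v => u + v - 1 + C (1 - u) (1 - v)) p q (1 - w) hp0 (refl_mem w hw)]
    · intro a ha b hb hab
      have := hm (refl_mem b hb) (refl_mem a ha) (by linarith)
      simp only at this ⊢
      linarith
    · simp only [sub_sub_cancel]
      linarith
end

section
/- Let C be a bivariate copula, C⁺(u,v) = min(u,v), C⊥(u,v) = uv, C⁻(u,v) = max(u+v−1, 0), and let p, q ∈ (0,1). If C⊥(u,v) ≤ C(u,v) ≤ C⁺(u,v) for all (u,v) ∈ [0,1]², then p·q ≤ v(q|p; C) ≤ q. If C⁻(u,v) ≤ C(u,v) ≤ C⊥(u,v) for all (u,v) ∈ [0,1]², then q ≤ v(q|p; C) ≤ 1 − (1−q)·p. -/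
open Set Filter Topology

/-- Range bounds for the copula-adjusted probability level. -/
theorem vLevel_range_bounds (C : ℝ → ℝ → ℝ) (hC : IsCopula C)
    (p q : ℝ) (hp : p ∈ Ioo (0:ℝ) 1) (hq : q ∈ Ioo (0:ℝ) 1) :
    ((∀ u ∈ Icc (0:ℝ) 1, ∀ v ∈ Icc (0:ℝ) 1, u * v ≤ C u v ∧ C u v ≤ min u v) →
      p * q ≤ vLevel C p q ∧ vLevel C p q ≤ q) ∧
    ((∀ u ∈ Icc (0:ℝ) 1, ∀ v ∈ Icc (0:ℝ) 1, max (u + v - 1) 0 ≤ C u v ∧ C u v ≤ u * v) →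
      q ≤ vLevel C p q ∧ vLevel C p q ≤ 1 - (1 - q) * p) := by
  have hb : BddBelow {v ∈ Icc (0:ℝ) 1 | q ≤ C p v / p} := ⟨0, fun v hv => hv.1.1⟩
  obtain ⟨hp0, hp1⟩ := hp
  obtain ⟨hq0, hq1⟩ := hq
  have hpI : p ∈ Icc (0:ℝ) 1 := ⟨hp0.le, hp1.le⟩
  have hne : ({v ∈ Icc (0:ℝ) 1 | q ≤ C p v / p}).Nonempty := by
    refine ⟨1, ⟨zero_le_one, le_rfl⟩, ?_⟩
    rw [hC.2.2.2.1 p hpI, div_self hp0.ne']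
    exact hq1.le
  unfold vLevel
  refine ⟨fun h => ⟨le_csInf hne ?_, csInf_le hb ?_⟩, fun h => ⟨le_csInf hne ?_, csInf_le hb ?_⟩⟩
  · rintro v ⟨hv, hqv⟩
    rw [le_div_iff₀ hp0] at hqv
    have h1 := (h p hpI v hv).2.trans (min_le_right _ _)
    linarith
  · have hqI : q ∈ Icc (0:ℝ) 1 := ⟨hq0.le, hq1.le⟩
    refine ⟨hqI, ?_⟩
    rw [le_div_iff₀ hp0]
    linarith [(h p hpI q hqI).1]
  · rintro v ⟨hv, hqv⟩
    rw [le_div_iff₀ hp0] at hqv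
    have h1 := (h p hpI v hv).2
    exact le_of_mul_le_mul_right (by linarith) hp0
  · have hI : 1 - (1 - q) * p ∈ Icc (0:ℝ) 1 := by
      constructor <;> nlinarith
    refine ⟨hI, ?_⟩
    rw [le_div_iff₀ hp0]
    have h1 := (le_max_left _ _).trans (h p hpI _ hI).1
    linarith
end

section
/- Let C be a bivariate copula and suppose A : (0,1) → [0,1] satisfies C(p,v)/p → A(v) as p ↓ 0 for every v ∈ (0,1), with locally uniform convergence on (0,1) (i.e., uniformly on every compact [a,b] ⊂ (0,1)). Set p₀ := lim_{v↓0} A(v), p₁ := 1 − lim_{v↑1} A(v), and A⁻(q) := inf{v ∈ (0,1) : A(v) ≥ q}. Then, as p ↓ 0: (a) for every q ∈ (0, p₀), v(q|p; C) → 0; (b) for every q ∈ (p₀, 1−p₁) at which A⁻ is continuous, v(q|p; C) → A⁻(q) ∈ (0,1); (c) for every q ∈ (1−p₁, 1), v(q|p; C) → 1. -/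
open Set Filter Topology

/-- The diagonal copula-adjusted probability level `v(p;C) = inf{v ∈ [0,1] : C(p,v) ≥ p²}`. -/
noncomputable def vDiag (C : ℝ → ℝ → ℝ) (p : ℝ) : ℝ :=
  sInf {v ∈ Icc (0:ℝ) 1 | p ^ 2 ≤ C p v}

/-- The generalized inverse `A⁻(q) = inf{v ∈ (0,1) : A(v) ≥ q}`. -/
noncomputable def genInv (A : ℝ → ℝ) (q : ℝ) : ℝ :=
  sInf {v ∈ Ioo (0:ℝ) 1 | q ≤ A v}

theorem aux_mono {C : ℝ → ℝ → ℝ} (hC : IsCopula C) {p v w : ℝ} (hp : p ∈ Ioc (0:ℝ) 1)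
    (hv : v ∈ Icc (0:ℝ) 1) (hw : w ∈ Icc (0:ℝ) 1) (hvw : v ≤ w) : C p v / p ≤ C p w / p := by
  obtain ⟨_, _, h0, _, _, hinc⟩ := hC
  have h := hinc 0 p v w ⟨le_rfl, zero_le_one⟩ ⟨hp.1.le, hp.2⟩ hv hw hp.1.le hvw
  rw [h0 v hv, h0 w hw] at h
  exact div_le_div_of_nonneg_right (by linarith) hp.1.le

theorem aux_up {C : ℝ → ℝ → ℝ} {p q w : ℝ} (hw : w ∈ Icc (0:ℝ) 1)
    (h : q ≤ C p w / p) : vLevel C p q ≤ w :=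
  csInf_le ⟨0, fun _ hx => hx.1.1⟩ ⟨hw, h⟩

theorem aux_one {C : ℝ → ℝ → ℝ} (hC : IsCopula C) {p q : ℝ} (hp : p ∈ Ioc (0:ℝ) 1)
    (hq : q ≤ 1) : q ≤ C p 1 / p := by
  rw [hC.2.2.2.1 p ⟨hp.1.le, hp.2⟩, div_self hp.1.ne']
  exact hq

theorem aux_low {C : ℝ → ℝ → ℝ} (hC : IsCopula C) {p q w : ℝ} (hp : p ∈ Ioc (0:ℝ) 1)
    (hq : q ≤ 1) (hw : w ∈ Icc (0:ℝ) 1) (h : C p w / p < q) : w ≤ vLevel C p q := by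
  refine le_csInf ⟨1, ⟨zero_le_one, le_rfl⟩, aux_one hC hp hq⟩ ?_
  rintro v ⟨hv, hqv⟩
  by_contra! hlt
  have := aux_mono hC hp hv hw hlt.le
  linarith

theorem aux_ev : ∀ᶠ p in 𝓝[>] (0:ℝ), p ∈ Ioc (0:ℝ) 1 :=
  Ioc_mem_nhdsGT zero_lt_one

theorem aux_nonneg (C : ℝ → ℝ → ℝ) (p q : ℝ) : 0 ≤ vLevel C p q :=
  Real.sInf_nonneg fun _ hx => hx.1.1

/-- Limit of the copula-adjusted probability level `v(q|p;C)` as `p ↓ 0`, in terms of the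
boundary masses `p₀ = A(0⁺)` and `p₁ = 1 − A(1⁻)` of the limiting conditional cdf `A`. -/
theorem vLevel_limit_regimes (C : ℝ → ℝ → ℝ) (hC : IsCopula C)
    (A : ℝ → ℝ) (p₀ p₁ : ℝ)
    (hArange : ∀ v ∈ Ioo (0:ℝ) 1, A v ∈ Icc (0:ℝ) 1)
    (hA : ∀ v ∈ Ioo (0:ℝ) 1, Tendsto (fun p => C p v / p) (𝓝[>] (0:ℝ)) (𝓝 (A v)))
    (hunif : ∀ a b : ℝ, 0 < a → a < b → b < 1 →
      TendstoUniformlyOn (fun p v => C p v / p) A (𝓝[>] (0:ℝ)) (Icc a b))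
    (hp₀ : Tendsto A (𝓝[>] (0:ℝ)) (𝓝 p₀))
    (hp₁ : Tendsto A (𝓝[<] (1:ℝ)) (𝓝 (1 - p₁))) :
    (∀ q ∈ Ioo (0:ℝ) p₀, Tendsto (fun p => vLevel C p q) (𝓝[>] (0:ℝ)) (𝓝 0)) ∧
    (∀ q ∈ Ioo p₀ (1 - p₁), ContinuousAt (genInv A) q →
      genInv A q ∈ Ioo (0:ℝ) 1 ∧
      Tendsto (fun p => vLevel C p q) (𝓝[>] (0:ℝ)) (𝓝 (genInv A q))) ∧
    (∀ q ∈ Ioo (1 - p₁) (1:ℝ), Tendsto (fun p => vLevel C p q) (𝓝[>] (0:ℝ)) (𝓝 1)) := by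
  have hUp : ∀ q w : ℝ, w ∈ Ioo (0:ℝ) 1 → q < A w →
      ∀ᶠ p in 𝓝[>] (0:ℝ), vLevel C p q ≤ w := by
    intro q w hw hq
    filter_upwards [(hA w hw).eventually (lt_mem_nhds hq)] with p h
    exact aux_up ⟨hw.1.le, hw.2.le⟩ h.le
  have hLow : ∀ q w : ℝ, q ≤ 1 → w ∈ Ioo (0:ℝ) 1 → A w < q →
      ∀ᶠ p in 𝓝[>] (0:ℝ), w ≤ vLevel C p q := by
    intro q w hq1 hw hq
    filter_upwards [(hA w hw).eventually (gt_mem_nhds hq), aux_ev] with p h hp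
    exact aux_low hC hp hq1 ⟨hw.1.le, hw.2.le⟩ h
  have hmono : ∀ v ∈ Ioo (0:ℝ) 1, ∀ w ∈ Ioo (0:ℝ) 1, v ≤ w → A v ≤ A w := by
    intro v hv w hw hvw
    refine le_of_tendsto_of_tendsto (hA v hv) (hA w hw) ?_
    filter_upwards [aux_ev] with p hp
    exact aux_mono hC hp ⟨hv.1.le, hv.2.le⟩ ⟨hw.1.le, hw.2.le⟩ hvw
  have hp₁' : 1 - p₁ ≤ 1 := by
    refine le_of_tendsto hp₁ ?_
    filter_upwards [Ioo_mem_nhdsLT (zero_lt_one (α := ℝ))] with v hv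
    exact (hArange v hv).2
  refine ⟨?_, ?_, ?_⟩
  · rintro q ⟨_, hq⟩
    refine tendsto_order.2 ⟨fun a ha => Eventually.of_forall fun p =>
      ha.trans_le (aux_nonneg C p q), fun b hb => ?_⟩
    obtain ⟨w, hw1, hw2, hw3⟩ := ((hp₀.eventually (lt_mem_nhds hq)).and
      (Eventually.and (Ioo_mem_nhdsGT (zero_lt_one (α := ℝ)) : ∀ᶠ x in 𝓝[>] (0:ℝ), x ∈ Ioo (0:ℝ) 1)
        (Ioo_mem_nhdsGT hb : ∀ᶠ x in 𝓝[>] (0:ℝ), x ∈ Ioo (0:ℝ) b))).exists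
    filter_upwards [hUp q w hw2 hw1] with p hp
    exact hp.trans_lt hw3.2
  · rintro q ⟨hq0, hq1⟩ hcont
    have hne : ∀ q' < 1 - p₁, ∃ w ∈ Ioo (0:ℝ) 1, q' < A w := by
      intro q' hq'
      obtain ⟨w, hw1, hw2⟩ := ((hp₁.eventually (lt_mem_nhds hq')).and
        (Ioo_mem_nhdsLT (zero_lt_one (α := ℝ)) : ∀ᶠ x in 𝓝[<] (1:ℝ), x ∈ Ioo (0:ℝ) 1)).exists
      exact ⟨w, hw2, hw1⟩
    have hbdd : ∀ q' : ℝ, BddBelow {v ∈ Ioo (0:ℝ) 1 | q' ≤ A v} :=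
      fun q' => ⟨0, fun _ hx => hx.1.1.le⟩
    have hg1 : genInv A q < 1 := by
      obtain ⟨w, hw, hqw⟩ := hne q hq1
      exact (csInf_le (hbdd q) ⟨hw, hqw.le⟩).trans_lt hw.2
    have hg0 : 0 < genInv A q := by
      obtain ⟨w, hw1, hw2⟩ := ((hp₀.eventually (gt_mem_nhds hq0)).and
        (Ioo_mem_nhdsGT (zero_lt_one (α := ℝ)) : ∀ᶠ x in 𝓝[>] (0:ℝ), x ∈ Ioo (0:ℝ) 1)).exists
      refine hw2.1.trans_le (le_csInf ?_ ?_)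
      · obtain ⟨w', hw', hqw⟩ := hne q hq1
        exact ⟨w', hw', hqw.le⟩
      · rintro v ⟨hv, hqv⟩
        by_contra! hlt
        have := hmono v hv w hw2 hlt.le
        linarith
    refine ⟨⟨hg0, hg1⟩, tendsto_order.2 ⟨fun a ha => ?_, fun b hb => ?_⟩⟩
    · obtain ⟨w, hw1, hw2⟩ := exists_between (max_lt ha hg0)
      have hw0 : w ∈ Ioo (0:ℝ) 1 := ⟨(le_max_right _ _).trans_lt hw1, hw2.trans hg1⟩
      have hAw : A w < q := by
        by_contra! h
        exact absurd (csInf_le (hbdd q) ⟨hw0, h⟩) (not_le.2 hw2)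
      filter_upwards [hLow q w (hq1.le.trans hp₁') hw0 hAw] with p hp
      exact ((le_max_left _ _).trans_lt hw1).trans_le hp
    · have hev : ∀ᶠ q' in 𝓝[>] q, genInv A q' < b :=
        (hcont.eventually (gt_mem_nhds hb)).filter_mono nhdsWithin_le_nhds
      obtain ⟨q', hq'b, hq'⟩ := (hev.and
        (Ioo_mem_nhdsGT hq1 : ∀ᶠ x in 𝓝[>] q, x ∈ Ioo q (1 - p₁))).exists
      obtain ⟨w', hw', hqw'⟩ := hne q' hq'.2
      obtain ⟨w, ⟨hw, hqw⟩, hwb⟩ := exists_lt_of_csInf_lt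
        (s := {v ∈ Ioo (0:ℝ) 1 | q' ≤ A v}) ⟨w', hw', hqw'.le⟩ hq'b
      filter_upwards [hUp q w hw (hq'.1.trans_le hqw)] with p hp
      exact hp.trans_lt hwb
  · rintro q ⟨hq, hq1⟩
    refine tendsto_order.2 ⟨fun a ha => ?_, fun b hb => ?_⟩
    · obtain ⟨w, hw1, hw2, hw3⟩ := ((hp₁.eventually (gt_mem_nhds hq)).and
        (Eventually.and (Ioo_mem_nhdsLT (zero_lt_one (α := ℝ)) : ∀ᶠ x in 𝓝[<] (1:ℝ), x ∈ Ioo (0:ℝ) 1)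
          (Ioo_mem_nhdsLT ha : ∀ᶠ x in 𝓝[<] (1:ℝ), x ∈ Ioo a 1))).exists
      filter_upwards [hLow q w hq1.le hw2 hw1] with p hp
      exact hw3.1.trans_le hp
    · filter_upwards [aux_ev] with p hp
      exact (aux_up ⟨zero_le_one, le_rfl⟩ (aux_one hC hp hq1.le)).trans_lt hb
end

section
/- Let C be a bivariate copula admitting a lower tail expansion with tail order κ = 1: there exist b : (0,∞)² → [0,∞), non-decreasing in each argument, and a remainder R such that C(u·w₁, u·w₂)/u = b(w₁,w₂) + R(u; w₁, w₂), where R(u; w₁, w₂) → 0 uniformly as u·w₁ → 0 and u·w₂ → 0, and such that b_∞ := sup_{r>0} b(1,r) = lim_{r→∞} b(1,r) ∈ (0,1]. Assume moreover that A(v) := lim_{p↓0} C(p,v)/p exists for every v ∈ (0,1). Then lim_{v↓0} A(v) = b_∞. -/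
open Set Filter Topology

/-- If the copula admits a lower tail expansion with tail order `κ = 1`, with tail dependence
function `b` (non-decreasing in each argument, bounded) and `b_∞ = sup_{r>0} b(1,r)
= lim_{r→∞} b(1,r) ∈ (0,1]`, and the limiting conditional cdf `A(v) = lim_{p↓0} C(p,v)/p`
exists on `(0,1)`, then `A(0⁺) = b_∞`. -/
theorem mass_at_zero_eq_binf (C : ℝ → ℝ → ℝ) (hC : IsCopula C)
    (b : ℝ → ℝ → ℝ) (R : ℝ → ℝ → ℝ → ℝ) (binf : ℝ) (A : ℝ → ℝ)
    (hexp : ∀ u w₁ w₂ : ℝ, 0 < u → 0 < w₁ → 0 < w₂ → u * w₁ ≤ 1 → u * w₂ ≤ 1 →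
      C (u * w₁) (u * w₂) / u = b w₁ w₂ + R u w₁ w₂)
    (hR : ∀ ε > (0:ℝ), ∃ δ > (0:ℝ), ∀ u w₁ w₂ : ℝ, 0 < u → 0 < w₁ → 0 < w₂ →
      u * w₁ ≤ δ → u * w₂ ≤ δ → |R u w₁ w₂| ≤ ε)
    (hbnn : ∀ w₁ > (0:ℝ), ∀ w₂ > (0:ℝ), 0 ≤ b w₁ w₂)
    (hbmono₁ : ∀ w₂ > (0:ℝ), MonotoneOn (fun w₁ => b w₁ w₂) (Ioi (0:ℝ)))
    (hbmono₂ : ∀ w₁ > (0:ℝ), MonotoneOn (fun w₂ => b w₁ w₂) (Ioi (0:ℝ)))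
    (hbsup : ∀ r > (0:ℝ), b 1 r ≤ binf)
    (hbinf : Tendsto (fun r => b 1 r) atTop (𝓝 binf))
    (hbinf_mem : binf ∈ Ioc (0:ℝ) 1)
    (hA : ∀ v ∈ Ioo (0:ℝ) 1, Tendsto (fun p => C p v / p) (𝓝[>] (0:ℝ)) (𝓝 (A v))) :
    Tendsto A (𝓝[>] (0:ℝ)) (𝓝 binf) := by
  rw [Metric.tendsto_nhds]
  intro ε hε
  obtain ⟨δ, hδ, hRδ⟩ := hR (ε / 2) (half_pos hε)
  have hm : (0:ℝ) < min δ (1 / 2) := lt_min hδ (by norm_num)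
  filter_upwards [Ioo_mem_nhdsGT hm] with v hv
  have hv0 : 0 < v := hv.1
  have hvδ : v ≤ δ := (hv.2.trans_le (min_le_left _ _)).le
  have hv1 : v < 1 := (hv.2.trans_le (min_le_right _ _)).trans (by norm_num)
  have hdiv : Tendsto (fun p : ℝ => v / p) (𝓝[>] (0:ℝ)) atTop := by
    simpa [div_eq_mul_inv] using tendsto_inv_nhdsGT_zero.const_mul_atTop hv0
  have hlim := ((hA v ⟨hv0, hv1⟩).sub (hbinf.comp hdiv)).abs
  have hle : |A v - binf| ≤ ε / 2 := by
    refine le_of_tendsto hlim ?_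
    filter_upwards [Ioo_mem_nhdsGT hv0] with p hp
    have hp0 : 0 < p := hp.1
    have hpv : p < v := hp.2
    have e : p * (v / p) = v := by field_simp
    have h1 := hexp p 1 (v / p) hp0 one_pos (div_pos hv0 hp0) (by linarith) (by linarith)
    have h2 := hRδ p 1 (v / p) hp0 one_pos (div_pos hv0 hp0) (by linarith) (by linarith)
    rw [e, mul_one] at h1
    simpa [Function.comp, h1] using h2
  rw [Real.dist_eq]
  linarith
end

section
/- Let C be a bivariate copula admitting a lower tail expansion with tail order κ = 1: C(u·w₁, u·w₂)/u = b(w₁,w₂) + R(u; w₁, w₂), where R(u; w₁, w₂) → 0 uniformly as u·w₁ → 0 and u·w₂ → 0. Assume (B1): b(1,r) = a₁·r + o(r) as r ↓ 0 for some a₁ > 0; and (B2): H(r) := b(1,r) is continuous and strictly increasing on (0,∞), with lim_{r↓0} H(r) = 0 and lim_{r→∞} H(r) = b_∞ ∈ (0,1]. Then for every q ∈ (0, b_∞), v(q|p; C) / (H⁻¹(q)·p) → 1 as p ↓ 0; in particular v(q|p; C) → 0. -/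
open Set Filter Topology

/-- Tail attraction rate under strong lower tail dependence (`κ = 1`): for `q ∈ (0, b_∞)`,
`v(q|p;C) ∼ H⁻¹(q)·p → 0` as `p ↓ 0`, where `H(r) = b(1,r)` and `H⁻¹` is its inverse. -/
theorem vLevel_tail_attraction_rate (C : ℝ → ℝ → ℝ) (hC : IsCopula C)
    (b : ℝ → ℝ → ℝ) (R : ℝ → ℝ → ℝ → ℝ) (a₁ binf : ℝ)
    (hexp : ∀ u w₁ w₂ : ℝ, 0 < u → 0 < w₁ → 0 < w₂ → u * w₁ ≤ 1 → u * w₂ ≤ 1 →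
      C (u * w₁) (u * w₂) / u = b w₁ w₂ + R u w₁ w₂)
    (hR : ∀ ε > (0:ℝ), ∃ δ > (0:ℝ), ∀ u w₁ w₂ : ℝ, 0 < u → 0 < w₁ → 0 < w₂ →
      u * w₁ ≤ δ → u * w₂ ≤ δ → |R u w₁ w₂| ≤ ε)
    -- (B1): `b(1,r) = a₁ r + o(r)` as `r ↓ 0`, with `a₁ > 0`
    (ha₁ : 0 < a₁)
    (hB1 : Tendsto (fun r => b 1 r / r) (𝓝[>] (0:ℝ)) (𝓝 a₁))
    -- (B2): `H(r) = b(1,r)` is continuous and strictly increasing on `(0,∞)`,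
    -- with `H(0⁺)=0` and `H(∞)=b_∞ ∈ (0,1]`
    (hHcont : ContinuousOn (fun r => b 1 r) (Ioi (0:ℝ)))
    (hHmono : StrictMonoOn (fun r => b 1 r) (Ioi (0:ℝ)))
    (hH0 : Tendsto (fun r => b 1 r) (𝓝[>] (0:ℝ)) (𝓝 0))
    (hHinf : Tendsto (fun r => b 1 r) atTop (𝓝 binf))
    (hbinf_mem : binf ∈ Ioc (0:ℝ) 1) :
    ∀ q ∈ Ioo (0:ℝ) binf,
      Tendsto (fun p => vLevel C p q / (sInf {r : ℝ | 0 < r ∧ q ≤ b 1 r} * p))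
        (𝓝[>] (0:ℝ)) (𝓝 1) ∧
      Tendsto (fun p => vLevel C p q) (𝓝[>] (0:ℝ)) (𝓝 0) := by
  rintro q ⟨hq0, hqb⟩
  obtain ⟨hC01, hCu0, hC0v, hCu1, hC1v, hC2⟩ := hC
  have hmono : ∀ p ∈ Icc (0:ℝ) 1, ∀ v₁ ∈ Icc (0:ℝ) 1, ∀ v₂ ∈ Icc (0:ℝ) 1, v₁ ≤ v₂ →
      C p v₁ ≤ C p v₂ := by
    intro p hp v₁ h1 v₂ h2 h
    have := hC2 0 p v₁ v₂ ⟨le_rfl, zero_le_one⟩ hp h1 h2 hp.1 h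
    rw [hC0v v₁ h1, hC0v v₂ h2] at this
    linarith
  -- the root of `H`
  obtain ⟨r₀, hr₀, hHr₀⟩ : ∃ r₀ : ℝ, 0 < r₀ ∧ b 1 r₀ = q := by
    obtain ⟨x, hxq, hx⟩ : ∃ x : ℝ, b 1 x < q ∧ 0 < x :=
      ((hH0.eventually_lt_const hq0).and self_mem_nhdsWithin).exists
    obtain ⟨y, hyq, hxy⟩ : ∃ y : ℝ, q < b 1 y ∧ x ≤ y :=
      ((hHinf.eventually_const_lt hqb).and (eventually_ge_atTop x)).exists
    have hsub : Icc x y ⊆ Ioi (0:ℝ) := fun z hz => lt_of_lt_of_le hx hz.1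
    obtain ⟨z, hz, hzq⟩ := intermediate_value_Icc hxy (hHcont.mono hsub) ⟨hxq.le, hyq.le⟩
    exact ⟨z, hsub hz, hzq⟩
  have hset : {r : ℝ | 0 < r ∧ q ≤ b 1 r} = Ici r₀ := by
    ext r
    constructor
    · rintro ⟨hr, hqr⟩
      rw [← hHr₀] at hqr
      exact (hHmono.le_iff_le (mem_Ioi.2 hr₀) (mem_Ioi.2 hr)).1 hqr
    · intro hr
      have hr' : 0 < r := lt_of_lt_of_le hr₀ hr
      refine ⟨hr', ?_⟩
      rw [← hHr₀]
      exact (hHmono.le_iff_le (mem_Ioi.2 hr₀) (mem_Ioi.2 hr')).2 hr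
  rw [hset, csInf_Ici]
  have hpos : ∀ᶠ p in 𝓝[>] (0:ℝ), 0 < p := self_mem_nhdsWithin
  have hsmall : ∀ δ > (0:ℝ), ∀ᶠ p in 𝓝[>] (0:ℝ), p ≤ δ := fun δ hδ =>
    nhdsWithin_le_nhds (Iic_mem_nhds hδ)
  have hsmall' : ∀ δ > (0:ℝ), ∀ r > (0:ℝ), ∀ᶠ p in 𝓝[>] (0:ℝ), p * r ≤ δ := by
    intro δ hδ r hr
    filter_upwards [hsmall (δ / r) (div_pos hδ hr)] with p hp
    exact (le_div_iff₀ hr).1 hp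
  have hlim : ∀ r > (0:ℝ), Tendsto (fun p => C p (p * r) / p) (𝓝[>] (0:ℝ)) (𝓝 (b 1 r)) := by
    intro r hr
    rw [Metric.tendsto_nhds]
    intro ε hε
    obtain ⟨δ, hδ, hRδ⟩ := hR (ε / 2) (half_pos hε)
    filter_upwards [hpos, hsmall δ hδ, hsmall' δ hδ r hr, hsmall 1 one_pos,
      hsmall' 1 one_pos r hr] with p hp h1 h2 h3 h4
    have e := hexp p 1 r hp one_pos hr (by simpa using h3) h4
    have f := hRδ p 1 r hp one_pos hr (by simpa using h1) h2
    rw [mul_one] at e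
    rw [e, Real.dist_eq, add_sub_cancel_left]
    linarith
  have hbdd : ∀ p, BddBelow {v ∈ Icc (0:ℝ) 1 | q ≤ C p v / p} := fun p => ⟨0, fun v hv => hv.1.1⟩
  have hle : ∀ r > r₀, ∀ᶠ p in 𝓝[>] (0:ℝ), vLevel C p q ≤ p * r := by
    intro r hr
    have hr' : 0 < r := hr₀.trans hr
    have hq : q < b 1 r := hHr₀ ▸ hHmono (mem_Ioi.2 hr₀) (mem_Ioi.2 hr') hr
    filter_upwards [hpos, (hlim r hr').eventually_const_lt hq, hsmall' 1 one_pos r hr']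
      with p hp h1 h2
    exact csInf_le (hbdd p) ⟨⟨by positivity, h2⟩, h1.le⟩
  have hge : ∀ r > 0, r < r₀ → ∀ᶠ p in 𝓝[>] (0:ℝ), p * r ≤ vLevel C p q := by
    intro r hr hrr
    have hq : b 1 r < q := hHr₀ ▸ hHmono (mem_Ioi.2 hr) (mem_Ioi.2 hr₀) hrr
    have hq' : q < b 1 (r₀ + 1) :=
      hHr₀ ▸ hHmono (mem_Ioi.2 hr₀) (mem_Ioi.2 (by linarith)) (by linarith : r₀ < r₀ + 1)
    filter_upwards [hpos, (hlim r hr).eventually_lt_const hq, hsmall' 1 one_pos r hr,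
      hsmall 1 one_pos, (hlim (r₀ + 1) (by linarith)).eventually_const_lt hq',
      hsmall' 1 one_pos (r₀ + 1) (by linarith)] with p hp h1 h2 h3 h4 h5
    refine le_csInf ⟨p * (r₀ + 1), ⟨by positivity, h5⟩, h4.le⟩ ?_
    rintro v ⟨hv, hqv⟩
    by_contra! hlt
    have hm := hmono p ⟨hp.le, h3⟩ v hv (p * r) ⟨by positivity, h2⟩ hlt.le
    have := div_le_div_of_nonneg_right hm hp.le
    linarith
  have hmain : Tendsto (fun p => vLevel C p q / p) (𝓝[>] (0:ℝ)) (𝓝 r₀) := by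
    rw [tendsto_order]
    constructor
    · intro a ha
      obtain ⟨r, har, hrr⟩ := exists_between (max_lt ha hr₀)
      filter_upwards [hpos, hge r ((le_max_right _ _).trans_lt har) hrr] with p hp h
      have : r ≤ vLevel C p q / p := (le_div_iff₀ hp).2 (by linarith)
      exact ((le_max_left _ _).trans_lt har).trans_le this
    · intro a ha
      obtain ⟨r, hrr, hra⟩ := exists_between ha
      filter_upwards [hpos, hle r hrr] with p hp h
      have : vLevel C p q / p ≤ r := (div_le_iff₀ hp).2 (by linarith)
      linarith
  constructor
  · have h := hmain.div_const r₀
    rw [div_self hr₀.ne'] at h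
    refine h.congr fun p => ?_
    rw [div_div, mul_comm]
  · have hid : Tendsto (fun p : ℝ => p) (𝓝[>] (0:ℝ)) (𝓝 0) := tendsto_id.mono_left nhdsWithin_le_nhds
    have h := hmain.mul hid
    rw [mul_zero] at h
    refine h.congr' ?_
    filter_upwards [hpos] with p hp
    exact div_mul_cancel₀ _ hp.ne'
end

section
/- Let C be a bivariate copula admitting a lower tail expansion with tail order κ > 1: there exist a : (0,∞)² → [0,∞), a function ℓ slowly varying at 0, and a remainder R such that C(u·w₁, u·w₂)/u^κ = a(w₁,w₂)·ℓ(u) + R(u; w₁, w₂), where R(u; w₁, w₂) → 0 uniformly as u·w₁ → 0 and u·w₂ → 0. Assume (B1): a(1,r) = a₁·r + o(r) as r ↓ 0 for some a₁ > 0; and (B2): a(1,r) = O(r^ρ) as r → ∞ for some 0 < ρ ≤ κ − 1. Suppose in addition that A(v) := lim_{p↓0} C(p,v)/p exists for every v ∈ (0,1), with locally uniform convergence on (0,1). Then lim_{v↓0} A(v) = 0, i.e., the limiting conditional cdf A has no mass at 0. -/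
open Set Filter Topology

/-- If the copula admits a lower tail expansion with tail order `κ > 1` (with slowly varying
`ℓ`, boundary conditions (B1) and (B2)), and the limiting conditional cdf
`A(v) = lim_{p↓0} C(p,v)/p` exists with locally uniform convergence on `(0,1)`,
then `A(0⁺) = 0`: the limiting conditional cdf has no mass at `0`. -/
theorem no_mass_at_zero_of_tail_order_gt_one (C : ℝ → ℝ → ℝ) (hC : IsCopula C)
    (κ ρ a₁ : ℝ) (a : ℝ → ℝ → ℝ) (ℓ : ℝ → ℝ) (R : ℝ → ℝ → ℝ → ℝ) (A : ℝ → ℝ)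
    (hκ : 1 < κ)
    (hℓpos : ∀ u ∈ Ioo (0:ℝ) 1, 0 < ℓ u)
    (hslow : ∀ c > (0:ℝ), Tendsto (fun u => ℓ (c * u) / ℓ u) (𝓝[>] (0:ℝ)) (𝓝 1))
    (hann : ∀ w₁ > (0:ℝ), ∀ w₂ > (0:ℝ), 0 ≤ a w₁ w₂)
    (hexp : ∀ u w₁ w₂ : ℝ, 0 < u → 0 < w₁ → 0 < w₂ → u * w₁ ≤ 1 → u * w₂ ≤ 1 →
      C (u * w₁) (u * w₂) / u ^ κ = a w₁ w₂ * ℓ u + R u w₁ w₂)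
    (hR : ∀ ε > (0:ℝ), ∃ δ > (0:ℝ), ∀ u w₁ w₂ : ℝ, 0 < u → 0 < w₁ → 0 < w₂ →
      u * w₁ ≤ δ → u * w₂ ≤ δ → |R u w₁ w₂| ≤ ε)
    -- (B1): `a(1,r) = a₁ r + o(r)` as `r ↓ 0`, with `a₁ > 0`
    (ha₁ : 0 < a₁)
    (hB1 : Tendsto (fun r => a 1 r / r) (𝓝[>] (0:ℝ)) (𝓝 a₁))
    -- (B2): `a(1,r) = O(r^ρ)` as `r → ∞` for some `0 < ρ ≤ κ − 1`
    (hρ : 0 < ρ) (hρκ : ρ ≤ κ - 1)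
    (hB2 : ∃ M > (0:ℝ), ∃ r₀ > (0:ℝ), ∀ r ≥ r₀, a 1 r ≤ M * r ^ ρ)
    (hA : ∀ v ∈ Ioo (0:ℝ) 1, Tendsto (fun p => C p v / p) (𝓝[>] (0:ℝ)) (𝓝 (A v)))
    (hunif : ∀ b c : ℝ, 0 < b → b < c → c < 1 →
      TendstoUniformlyOn (fun p v => C p v / p) A (𝓝[>] (0:ℝ)) (Icc b c)) :
    Tendsto A (𝓝[>] (0:ℝ)) (𝓝 0) := by
  have hpos : 0 < κ := by linarith
  obtain ⟨δ, hδ, hRδ⟩ := hR 1 one_pos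
  -- a point where `a 1 r > 0`
  obtain ⟨r, hr, har⟩ : ∃ r : ℝ, 0 < r ∧ 0 < a 1 r := by
    have h1 : ∀ᶠ r in 𝓝[>] (0:ℝ), 0 < a 1 r / r := hB1.eventually (lt_mem_nhds ha₁)
    obtain ⟨r, h, hr⟩ := (h1.and self_mem_nhdsWithin).exists
    have hr' : 0 < r := hr
    exact ⟨r, hr', by
      have := mul_pos h hr'
      rwa [div_mul_cancel₀ _ hr'.ne'] at this⟩
  -- the slowly varying function is bounded near zero
  have hbdd : ∃ K > (0:ℝ), ∀ᶠ u in 𝓝[>] (0:ℝ), ℓ u ≤ K := by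
    by_cases hcase : ∀ᶠ u in 𝓝[>] (0:ℝ), ℓ u ≤ 1
    · exact ⟨1, one_pos, hcase⟩
    have hfreq : ∃ᶠ u in 𝓝[>] (0:ℝ), 1 < ℓ u := by
      intro h
      exact hcase (h.mono fun u hu => not_lt.mp hu)
    have key : ∀ u t : ℝ, 0 < u → 0 < t → u * t ≤ 1 → u * t * r ≤ 1 →
        a t (t * r) * ℓ u + R u t (t * r) = t ^ κ * (a 1 r * ℓ (u * t) + R (u * t) 1 r) := by
      intro u t hu ht h1 h2
      have e1 := hexp u t (t * r) hu ht (mul_pos ht hr) h1 (by rw [← mul_assoc]; exact h2)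
      have e2 := hexp (u * t) 1 r (mul_pos hu ht) one_pos hr (by linarith) h2
      rw [← e1, ← e2, mul_one, ← mul_assoc, Real.mul_rpow hu.le ht.le]
      have := (Real.rpow_pos_of_pos hu κ).ne'
      have := (Real.rpow_pos_of_pos ht κ).ne'
      field_simp
    have hom : ∀ t : ℝ, 0 < t → a t (t * r) = t ^ κ * a 1 r := by
      intro t ht
      have htk := Real.rpow_pos_of_pos ht κ
      have hlim : Tendsto (fun u => |a t (t * r) - t ^ κ * a 1 r * (ℓ (t * u) / ℓ u)|)
          (𝓝[>] (0:ℝ)) (𝓝 |a t (t * r) - t ^ κ * a 1 r * 1|) :=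
        (tendsto_const_nhds.sub (tendsto_const_nhds.mul (hslow t ht))).abs
      have hle : ∀ ε > (0:ℝ), |a t (t * r) - t ^ κ * a 1 r * 1| ≤ (1 + t ^ κ) * ε := by
        intro ε hε
        obtain ⟨d, hd, hRd⟩ := hR ε hε
        have hsm : ∀ c e : ℝ, 0 < e → ∀ᶠ u in 𝓝[>] (0:ℝ), u * c < e := by
          intro c e he
          have : Tendsto (fun u : ℝ => u * c) (𝓝[>] (0:ℝ)) (𝓝 (0 * c)) :=
            (continuous_id.mul continuous_const).continuousAt.mono_left nhdsWithin_le_nhds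
          rw [zero_mul] at this
          exact this.eventually (gt_mem_nhds he)
        have hf := hfreq.and_eventually ((hsm t 1 one_pos).and ((hsm (t * r) 1 one_pos).and
          ((hsm t d hd).and ((hsm (t * r) d hd).and self_mem_nhdsWithin))))
        have hcl : IsClosed (Iic ((1 + t ^ κ) * ε)) := isClosed_Iic
        refine hcl.mem_of_frequently_of_tendsto (hf.mono ?_) hlim
        rintro u ⟨hl, h1, h2, h3, h4, hu⟩
        have hu' : 0 < u := hu
        have k := key u t hu' ht h1.le (by rw [mul_assoc]; exact h2.le)
        have b1 := hRd u t (t * r) hu' ht (mul_pos ht hr) h3.le h4.le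
        have b2 := hRd (u * t) 1 r (mul_pos hu' ht) one_pos hr (by linarith)
          (by rw [mul_assoc]; exact h4.le)
        have hl0 : 0 < ℓ u := by linarith
        have e : a t (t * r) - t ^ κ * a 1 r * (ℓ (t * u) / ℓ u)
            = (t ^ κ * R (u * t) 1 r - R u t (t * r)) / ℓ u := by
          rw [mul_comm t u]
          rw [eq_div_iff hl0.ne', sub_mul, mul_assoc _ (_ / _), div_mul_cancel₀ _ hl0.ne']
          linarith
        have b3 : |t ^ κ * R (u * t) 1 r - R u t (t * r)| ≤ (1 + t ^ κ) * ε := by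
          rw [abs_le] at b1 b2 ⊢
          constructor <;> nlinarith
        rw [mem_Iic, e, abs_div, abs_of_pos hl0]
        exact (div_le_self (abs_nonneg _) hl.le).trans b3
      have h0 : |a t (t * r) - t ^ κ * a 1 r * 1| ≤ 0 := by
        apply le_of_forall_pos_le_add
        intro ε hε
        have h := hle (ε / (1 + t ^ κ)) (by positivity)
        rw [mul_div_cancel₀ _ (by positivity)] at h
        linarith
      have := abs_nonpos_iff.mp h0
      linarith
    -- compare with a fixed base level `s`
    obtain ⟨s, hs, hs1, hs2, hs3, hs4⟩ : ∃ s : ℝ, 0 < s ∧ s ≤ 1 ∧ s * r ≤ 1 ∧ s ≤ δ ∧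
        s * r ≤ δ := by
      have hm : 0 < min 1 δ := lt_min one_pos hδ
      have h1r : 0 < 1 + r := by linarith
      have e : min 1 δ / (1 + r) * (1 + r) = min 1 δ := div_mul_cancel₀ _ h1r.ne'
      have hq : 0 < min 1 δ / (1 + r) := div_pos hm h1r
      have := min_le_left 1 δ
      have := min_le_right 1 δ
      have := mul_pos hq hr
      refine ⟨_, hq, ?_, ?_, ?_, ?_⟩ <;> nlinarith
    refine ⟨(|a 1 r * ℓ s| + 2) / a 1 r, by positivity, ?_⟩
    filter_upwards [Ioo_mem_nhdsGT hs] with u hu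
    have ht : 1 ≤ s / u := (one_le_div hu.1).mpr hu.2.le
    have ht0 : 0 < s / u := by linarith
    have eus : u * (s / u) = s := mul_div_cancel₀ _ hu.1.ne'
    have k := key u (s / u) hu.1 ht0 (by rw [eus]; exact hs1) (by rw [eus]; exact hs2)
    rw [hom _ ht0, eus] at k
    have b1 := hRδ u (s / u) (s / u * r) hu.1 ht0 (mul_pos ht0 hr) (by rw [eus]; exact hs3)
      (by rw [← mul_assoc, eus]; exact hs4)
    have b2 := hRδ s 1 r hs one_pos hr (by linarith) hs4
    have hT : 1 ≤ (s / u) ^ κ := Real.one_le_rpow ht hpos.le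
    rw [le_div_iff₀ har]
    have h3 : (s / u) ^ κ * (a 1 r * ℓ u - a 1 r * ℓ s - R s 1 r - 1) ≤ 0 := by
      have := (abs_le.mp b1).1
      nlinarith
    have h4 : a 1 r * ℓ u - a 1 r * ℓ s - R s 1 r - 1 ≤ 0 := by
      by_contra h
      push Not at h
      have := mul_pos (by linarith : 0 < (s / u) ^ κ) h
      linarith
    have := (abs_le.mp b2).2
    have := le_abs_self (a 1 r * ℓ s)
    linarith
  obtain ⟨K, hK, hKev⟩ := hbdd
  obtain ⟨M, hM, r₀, hr₀, hMr⟩ := hB2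
  -- bounds on `A`
  have hAnn : ∀ v ∈ Ioo (0:ℝ) 1, 0 ≤ A v := by
    intro v hv
    refine ge_of_tendsto (hA v hv) ?_
    filter_upwards [Ioo_mem_nhdsGT (zero_lt_one' ℝ)] with p hp
    exact div_nonneg (hC.1 p ⟨hp.1.le, hp.2.le⟩ v ⟨hv.1.le, hv.2.le⟩).1 hp.1.le
  have hAle : ∀ v ∈ Ioo (0:ℝ) 1, v ≤ δ → A v ≤ M * K * v ^ ρ := by
    intro v hv hvδ
    have hlim : Tendsto (fun p : ℝ => M * K * v ^ ρ + p ^ (κ - 1)) (𝓝[>] (0:ℝ))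
        (𝓝 (M * K * v ^ ρ + 0)) := by
      refine tendsto_const_nhds.add ?_
      have h := (Real.continuousAt_rpow_const (0:ℝ) (κ - 1) (Or.inr (by linarith))).tendsto
      rw [Real.zero_rpow (by linarith)] at h
      exact h.mono_left nhdsWithin_le_nhds
    rw [add_zero] at hlim
    refine le_of_tendsto_of_tendsto (hA v hv) hlim ?_
    filter_upwards [hKev, Ioo_mem_nhdsGT (zero_lt_one' ℝ), Ioo_mem_nhdsGT hδ,
      Ioo_mem_nhdsGT (div_pos hv.1 hr₀)] with p hp1 hp2 hp3 hp4
    have hp : 0 < p := hp2.1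
    have hw : 0 < v / p := div_pos hv.1 hp
    have epv : p * (v / p) = v := mul_div_cancel₀ _ hp.ne'
    have e := hexp p 1 (v / p) hp one_pos hw (by linarith [hp2.2]) (by rw [epv]; exact hv.2.le)
    have b := (abs_le.mp (hRδ p 1 (v / p) hp one_pos hw (by linarith [hp3.2])
      (by rw [epv]; exact hvδ))).2
    rw [epv, mul_one] at e
    have hr0 : r₀ ≤ v / p := by
      have := (lt_div_iff₀ hr₀).mp hp4.2
      rw [le_div_iff₀ hp]
      linarith
    have hm := hMr _ hr0
    have hl := hℓpos p hp2
    have hwρ := Real.rpow_pos_of_pos hw ρ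
    have hb : C p v / p ^ κ ≤ M * (v / p) ^ ρ * K + 1 := by
      rw [e]
      have : a 1 (v / p) * ℓ p ≤ M * (v / p) ^ ρ * K :=
        mul_le_mul hm hp1 hl.le (by positivity)
      linarith
    have hpk : p ^ κ = p ^ (κ - 1) * p := by
      rw [Real.rpow_sub_one hp.ne', div_mul_cancel₀ _ hp.ne']
    have hq := Real.rpow_pos_of_pos hp (κ - 1)
    have hpr := Real.rpow_pos_of_pos hp ρ
    have e2 : C p v / p = p ^ (κ - 1) * (C p v / p ^ κ) := by
      rw [hpk]
      field_simp
    have h5 : p ^ (κ - 1) * (v / p) ^ ρ ≤ v ^ ρ := by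
      have hle : p ^ (κ - 1) ≤ p ^ ρ := Real.rpow_le_rpow_of_exponent_ge hp hp2.2.le hρκ
      calc p ^ (κ - 1) * (v / p) ^ ρ ≤ p ^ ρ * (v / p) ^ ρ :=
            mul_le_mul_of_nonneg_right hle hwρ.le
        _ = v ^ ρ := by rw [← Real.mul_rpow hp.le hw.le, epv]
    calc C p v / p = p ^ (κ - 1) * (C p v / p ^ κ) := e2
      _ ≤ p ^ (κ - 1) * (M * (v / p) ^ ρ * K + 1) := mul_le_mul_of_nonneg_left hb hq.le
      _ = M * K * (p ^ (κ - 1) * (v / p) ^ ρ) + p ^ (κ - 1) := by ring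
      _ ≤ M * K * v ^ ρ + p ^ (κ - 1) := by
        have := mul_le_mul_of_nonneg_left h5 (mul_pos hM hK).le
        linarith
  have hlim : Tendsto (fun v : ℝ => M * K * v ^ ρ) (𝓝[>] (0:ℝ)) (𝓝 0) := by
    have h := (Real.continuousAt_rpow_const (0:ℝ) ρ (Or.inr hρ.le)).tendsto
    rw [Real.zero_rpow hρ.ne'] at h
    have h2 := (h.mono_left (nhdsWithin_le_nhds (s := Ioi 0))).const_mul (M * K)
    rwa [mul_zero] at h2
  refine tendsto_of_tendsto_of_tendsto_of_le_of_le' tendsto_const_nhds hlim ?_ ?_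
  · filter_upwards [Ioo_mem_nhdsGT (zero_lt_one' ℝ)] with v hv using hAnn v hv
  · filter_upwards [Ioo_mem_nhdsGT (zero_lt_one' ℝ), Ioo_mem_nhdsGT hδ] with v hv hv2
      using hAle v hv hv2.2.le
end

section
/- Let C be a bivariate copula and C²*(u,v) := u − C(u, 1−v) its 2-reflection. Assume C²* admits a lower tail expansion with tail order κ²* = 1: C²*(u·w₁, u·w₂)/u = b²*(w₁,w₂) + R(u; w₁, w₂), where R(u; w₁, w₂) → 0 uniformly as u·w₁ → 0 and u·w₂ → 0; b²*(1,r) = a₁·r + o(r) as r ↓ 0 for some a₁ > 0; and H²*(r) := b²*(1,r) is continuous and strictly increasing on (0,∞) with lim_{r↓0} H²*(r) = 0 and lim_{r→∞} H²*(r) = b_∞²* ∈ (0,1]. Then for every q ∈ (1 − b_∞²*, 1), (1 − v(q|p; C)) / ((H²*)⁻¹(1−q)·p) → 1 as p ↓ 0; in particular v(q|p; C) → 1. -/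
open Set Filter Topology

/-- Tail repulsion rate: if the 2-reflected copula `C²*(u,v) = u − C(u,1−v)` has strong
lower tail dependence (`κ²* = 1`) with tail dependence function `b²*` and
`H²*(r) = b²*(1,r)` continuous, strictly increasing, with limits `0` at `0` and
`b_∞²* ∈ (0,1]` at `∞`, then for `q ∈ (1−b_∞²*, 1)`,
`1 − v(q|p;C) ∼ (H²*)⁻¹(1−q)·p`, so `v(q|p;C) → 1`. -/
theorem vLevel_tail_repulsion_rate (C : ℝ → ℝ → ℝ) (hC : IsCopula C)
    (b2 : ℝ → ℝ → ℝ) (R : ℝ → ℝ → ℝ → ℝ) (a₁ binf2 : ℝ)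
    (hexp : ∀ u w₁ w₂ : ℝ, 0 < u → 0 < w₁ → 0 < w₂ → u * w₁ ≤ 1 → u * w₂ ≤ 1 →
      (u * w₁ - C (u * w₁) (1 - u * w₂)) / u = b2 w₁ w₂ + R u w₁ w₂)
    (hR : ∀ ε > (0:ℝ), ∃ δ > (0:ℝ), ∀ u w₁ w₂ : ℝ, 0 < u → 0 < w₁ → 0 < w₂ →
      u * w₁ ≤ δ → u * w₂ ≤ δ → |R u w₁ w₂| ≤ ε)
    (ha₁ : 0 < a₁)
    (hB1 : Tendsto (fun r => b2 1 r / r) (𝓝[>] (0:ℝ)) (𝓝 a₁))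
    (hHcont : ContinuousOn (fun r => b2 1 r) (Ioi (0:ℝ)))
    (hHmono : StrictMonoOn (fun r => b2 1 r) (Ioi (0:ℝ)))
    (hH0 : Tendsto (fun r => b2 1 r) (𝓝[>] (0:ℝ)) (𝓝 0))
    (hHinf : Tendsto (fun r => b2 1 r) atTop (𝓝 binf2))
    (hbinf_mem : binf2 ∈ Ioc (0:ℝ) 1) :
    ∀ q ∈ Ioo (1 - binf2) (1:ℝ),
      Tendsto (fun p => (1 - vLevel C p q) / (sInf {r : ℝ | 0 < r ∧ 1 - q ≤ b2 1 r} * p))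
        (𝓝[>] (0:ℝ)) (𝓝 1) ∧
      Tendsto (fun p => vLevel C p q) (𝓝[>] (0:ℝ)) (𝓝 1) := by
  obtain ⟨_, hC0, hC0', hC1, _, hinc⟩ := hC
  intro q hq
  obtain ⟨hq1, hq2⟩ := hq
  obtain ⟨x, hxs, hx⟩ : ∃ x, b2 1 x < 1 - q ∧ 0 < x :=
    ((hH0.eventually (gt_mem_nhds (by linarith : (0:ℝ) < 1 - q))).and
      self_mem_nhdsWithin).exists
  obtain ⟨y, hys, hy⟩ : ∃ y, 1 - q < b2 1 y ∧ x < y :=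
    ((hHinf.eventually (lt_mem_nhds (by linarith : 1 - q < binf2))).and
      (eventually_gt_atTop x)).exists
  obtain ⟨r0, hr0m, hr0⟩ := intermediate_value_Icc hy.le
    (hHcont.mono (fun z hz => lt_of_lt_of_le hx hz.1)) ⟨hxs.le, hys.le⟩
  have hr0p : 0 < r0 := lt_of_lt_of_le hx hr0m.1
  simp only at hr0
  have hinf : sInf {r : ℝ | 0 < r ∧ 1 - q ≤ b2 1 r} = r0 := by
    apply IsLeast.csInf_eq
    refine ⟨⟨hr0p, hr0.ge⟩, ?_⟩
    rintro r ⟨hr, hrq⟩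
    by_contra! h
    have := hHmono (mem_Ioi.2 hr) (mem_Ioi.2 hr0p) h
    simp only at this
    linarith
  rw [hinf]
  have key : ∀ r > (0:ℝ), ∀ e > (0:ℝ), ∀ᶠ p in 𝓝[>] (0:ℝ), 0 < p ∧ p ≤ 1 ∧ p * r ≤ 1 ∧
      |1 - C p (1 - p * r) / p - b2 1 r| ≤ e := by
    intro r hr e he
    obtain ⟨δ, hδ, hδR⟩ := hR e he
    have hm : 0 < min (min 1 δ) (min 1 δ / r) := by positivity
    filter_upwards [Ioo_mem_nhdsGT hm] with p hp
    obtain ⟨hp0, hp1⟩ := hp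
    have h1 := lt_of_lt_of_le hp1 (min_le_left _ _)
    have h2 := lt_of_lt_of_le hp1 (min_le_right _ _)
    rw [lt_div_iff₀ hr] at h2
    have h3 := lt_min_iff.1 h1
    have h4 := lt_min_iff.1 h2
    refine ⟨hp0, h3.1.le, h4.1.le, ?_⟩
    have h5 := hδR p 1 r hp0 one_pos hr (by linarith) (by linarith)
    have h6 := hexp p 1 r hp0 one_pos hr (by linarith) (by linarith)
    rw [mul_one, sub_div, div_self hp0.ne'] at h6
    rw [h6]
    simpa using h5
  have hupper : ∀ r, r0 < r → ∀ᶠ p in 𝓝[>] (0:ℝ), (1 - vLevel C p q) / p ≤ r := by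
    intro r hr
    have hrp := hr0p.trans hr
    have hlt := hHmono (mem_Ioi.2 hr0p) (mem_Ioi.2 hrp) hr
    simp only at hlt
    filter_upwards [key r hrp ((b2 1 r - b2 1 r0) / 2) (by linarith)] with p hp
    obtain ⟨hp0, hp1, hpr, hR'⟩ := hp
    have h1 := (abs_le.1 hR').1
    rw [div_le_iff₀ hp0]
    have : 1 - p * r ≤ vLevel C p q := by
      apply le_csInf
      · exact ⟨1, ⟨by simp, by rw [hC1 p ⟨hp0.le, hp1⟩, div_self hp0.ne']; exact hq2.le⟩⟩
      · rintro v ⟨hv, hvq⟩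
        by_contra! h
        have hpr0 : 0 < p * r := by positivity
        have hz : (1 - p * r) ∈ Icc (0:ℝ) 1 := ⟨by linarith, by linarith⟩
        have h2 := hinc 0 p v (1 - p * r) (by simp) ⟨hp0.le, hp1⟩ hv hz hp0.le h.le
        rw [hC0' _ hv, hC0' _ hz] at h2
        have h3 : C p v / p ≤ C p (1 - p * r) / p :=
          div_le_div_of_nonneg_right (by linarith) hp0.le
        linarith
    linarith
  have hlower : ∀ r, 0 < r → r < r0 → ∀ᶠ p in 𝓝[>] (0:ℝ), r ≤ (1 - vLevel C p q) / p := by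
    intro r hrp hr
    have hlt := hHmono (mem_Ioi.2 hrp) (mem_Ioi.2 hr0p) hr
    simp only at hlt
    filter_upwards [key r hrp ((b2 1 r0 - b2 1 r) / 2) (by linarith)] with p hp
    obtain ⟨hp0, hp1, hpr, hR'⟩ := hp
    have h1 := (abs_le.1 hR').2
    rw [le_div_iff₀ hp0]
    have hpr0 : 0 < p * r := by positivity
    have : vLevel C p q ≤ 1 - p * r := by
      apply csInf_le
      · exact ⟨0, fun v hv => hv.1.1⟩
      · exact ⟨⟨by linarith, by linarith⟩, by linarith⟩
    linarith
  have hlim : Tendsto (fun p => (1 - vLevel C p q) / p) (𝓝[>] (0:ℝ)) (𝓝 r0) := by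
    rw [tendsto_order]
    constructor
    · intro a ha
      have hm : max a 0 < r0 := max_lt ha hr0p
      obtain ⟨r, h1, h2⟩ := exists_between hm
      have h3 := max_lt_iff.1 h1
      filter_upwards [hlower r h3.2 h2] with p hp
      linarith
    · intro a ha
      obtain ⟨r, h1, h2⟩ := exists_between ha
      filter_upwards [hupper r h1] with p hp
      linarith
  constructor
  · have h := hlim.div_const r0
    rw [div_self hr0p.ne'] at h
    refine h.congr (fun p => ?_)
    rw [div_div, mul_comm]
  · have hid : Tendsto (fun p : ℝ => p) (𝓝[>] (0:ℝ)) (𝓝 0) := tendsto_id.mono_left nhdsWithin_le_nhds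
    have h := (hlim.mul hid).const_sub 1
    rw [mul_zero, sub_zero] at h
    refine h.congr' ?_
    filter_upwards [self_mem_nhdsWithin] with p hp
    have hp0 : p ≠ 0 := (mem_Ioi.1 hp).ne'
    rw [div_mul_cancel₀ _ hp0]
    ring
end

section
/- Let C be a bivariate copula and suppose A : (0,1) → [0,1] satisfies C(p,v)/p → A(v) as p ↓ 0 for every v ∈ (0,1), with locally uniform convergence on (0,1). If lim_{v↓0} A(v) > 0, then v(p; C) → 0 as p ↓ 0. -/
open Set Filter Topology

/-- If the limiting conditional cdf `A` has positive mass at `0`, then the diagonal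
copula-adjusted level satisfies `v(p;C) → 0` as `p ↓ 0`. -/
theorem vDiag_tendsto_zero_of_mass_at_zero (C : ℝ → ℝ → ℝ) (hC : IsCopula C)
    (A : ℝ → ℝ) (p₀ : ℝ)
    (hArange : ∀ v ∈ Ioo (0:ℝ) 1, A v ∈ Icc (0:ℝ) 1)
    (hA : ∀ v ∈ Ioo (0:ℝ) 1, Tendsto (fun p => C p v / p) (𝓝[>] (0:ℝ)) (𝓝 (A v)))
    (hunif : ∀ a b : ℝ, 0 < a → a < b → b < 1 →
      TendstoUniformlyOn (fun p v => C p v / p) A (𝓝[>] (0:ℝ)) (Icc a b))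
    (hp₀ : Tendsto A (𝓝[>] (0:ℝ)) (𝓝 p₀))
    (hp₀pos : 0 < p₀) :
    Tendsto (fun p => vDiag C p) (𝓝[>] (0:ℝ)) (𝓝 0) := by
  have hnn : ∀ p, 0 ≤ vDiag C p := fun p => Real.sInf_nonneg (fun x hx => hx.1.1)
  refine Metric.tendsto_nhds.2 (fun ε hε => ?_)
  have h1 : ∀ᶠ v in 𝓝[>] (0:ℝ), 0 < A v := hp₀.eventually (lt_mem_nhds hp₀pos)
  have h2 : ∀ᶠ v in 𝓝[>] (0:ℝ), v ∈ Ioo (0:ℝ) (min ε 1) :=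
    Ioo_mem_nhdsGT (lt_min hε one_pos)
  obtain ⟨v, hAv, hv0, hv⟩ := (h1.and h2).exists
  have hvε := lt_of_lt_of_le hv (min_le_left _ _)
  have hv1 := lt_of_lt_of_le hv (min_le_right _ _)
  have h3 := (hA v ⟨hv0, hv1⟩).eventually (lt_mem_nhds (half_lt_self hAv))
  have h4 : ∀ᶠ p in 𝓝[>] (0:ℝ), p ∈ Ioo (0:ℝ) (A v / 2) := Ioo_mem_nhdsGT (half_pos hAv)
  filter_upwards [h3, h4] with p hp3 hp4
  rw [Real.dist_eq, sub_zero, abs_of_nonneg (hnn p)]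
  refine lt_of_le_of_lt (csInf_le ⟨0, fun x hx => hx.1.1⟩ ⟨⟨hv0.le, hv1.le⟩, ?_⟩) hvε
  have h5 : p < C p v / p := hp4.2.trans hp3
  rw [lt_div_iff₀ hp4.1] at h5
  rw [sq]
  exact h5.le
end

section
/- Let C be a bivariate copula and suppose A : (0,1) → [0,1] satisfies C(p,v)/p → A(v) as p ↓ 0 for every v ∈ (0,1), with locally uniform convergence on (0,1). If lim_{v↓0} A(v) = 0, lim_{v↑1} A(v) ∈ (0,1], and inf{v ∈ (0,1) : A(v) > 0} = 0, then v(p; C) → 0 as p ↓ 0. -/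
open Set Filter Topology

/-- If the limiting conditional cdf `A` has no mass at `0`, positive mass `A(1⁻) ∈ (0,1]`
before `1`, and `inf{v ∈ (0,1) : A(v) > 0} = 0`, then `v(p;C) → 0` as `p ↓ 0`. -/
theorem vDiag_tendsto_zero_of_support_reaching_zero (C : ℝ → ℝ → ℝ) (hC : IsCopula C)
    (A : ℝ → ℝ) (a₁ : ℝ)
    (hArange : ∀ v ∈ Ioo (0:ℝ) 1, A v ∈ Icc (0:ℝ) 1)
    (hA : ∀ v ∈ Ioo (0:ℝ) 1, Tendsto (fun p => C p v / p) (𝓝[>] (0:ℝ)) (𝓝 (A v)))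
    (hunif : ∀ a b : ℝ, 0 < a → a < b → b < 1 →
      TendstoUniformlyOn (fun p v => C p v / p) A (𝓝[>] (0:ℝ)) (Icc a b))
    (hp₀ : Tendsto A (𝓝[>] (0:ℝ)) (𝓝 0))
    (hp₁ : Tendsto A (𝓝[<] (1:ℝ)) (𝓝 a₁)) (ha₁ : a₁ ∈ Ioc (0:ℝ) 1)
    (hsupp : sInf {v ∈ Ioo (0:ℝ) 1 | 0 < A v} = 0) :
    Tendsto (fun p => vDiag C p) (𝓝[>] (0:ℝ)) (𝓝 0) := by
  have hne : {v ∈ Ioo (0:ℝ) 1 | 0 < A v}.Nonempty := by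
    have h1 : ∀ᶠ v in 𝓝[<] (1:ℝ), 0 < A v := hp₁.eventually (lt_mem_nhds ha₁.1)
    have h2 : ∀ᶠ v in 𝓝[<] (1:ℝ), v ∈ Ioo (0:ℝ) 1 := Ioo_mem_nhdsLT one_pos
    obtain ⟨v, hv1, hv2⟩ := (h1.and h2).exists
    exact ⟨v, hv2, hv1⟩
  have hbdd : ∀ p, BddBelow {v ∈ Icc (0:ℝ) 1 | p ^ 2 ≤ C p v} := fun p =>
    ⟨0, fun v hv => hv.1.1⟩
  refine tendsto_order.2 ⟨fun a ha => ?_, fun ε hε => ?_⟩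
  · refine Eventually.of_forall fun p => lt_of_lt_of_le ha ?_
    exact Real.sInf_nonneg fun v hv => hv.1.1
  · obtain ⟨v, ⟨hv, hAv⟩, hvε⟩ := exists_lt_of_csInf_lt hne (hsupp.trans_lt hε)
    have hid : Tendsto (fun p : ℝ => p) (𝓝[>] (0:ℝ)) (𝓝 0) := nhdsWithin_le_nhds
    have h1 := hid.eventually_lt (hA v hv) hAv
    filter_upwards [h1, self_mem_nhdsWithin] with p hp hp0
    have hp0' : (0:ℝ) < p := hp0
    refine lt_of_le_of_lt (csInf_le (hbdd p) ⟨⟨hv.1.le, hv.2.le⟩, ?_⟩) hvε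
    rw [lt_div_iff₀ hp0'] at hp
    nlinarith
end
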